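/- If μ is a compact Carleson measure for 𝓗(Γ,v), then lim_{n→∞} ∫_{Ω_n} v_n/|z−γ_n|² dμ(z) = 0 and lim_{n→∞} ( (∑_{m=1}^{n} v_m)·(∑_{m=n+1}^∞ ∫_{Ω_m} |z|^{-2} dμ(z)) + (∑_{m=n+1}^∞ v_m/|γ_m|²)·(∑_{m=1}^{n} μ(Ω_m)) ) = 0. -/

import Mathlib

open MeasureTheory Filter Topology
open scoped ENNReal NNReal

noncomputable section

/-! Sequences are indexed by `ℕ`, with the Lean index `n : ℕ` corresponding to the
paper's index `n + 1` (so `γ 0` is the paper's `γ_1`, `Omega γ 0` is the paper's `Ω_1`,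
the paper's partial sum `∑_{m=1}^{n} v_m` is `∑ m ∈ Finset.range (n+1), v m`, and the
paper's tail `∑_{m=n+1}^∞ c_m` is `∑' m : ℕ, c (n+1+m)`). -/

/-- The annular shells `Ω_n` (here `Omega γ 0` is the paper's `Ω_1`). -/
def Omega (γ : ℕ → ℂ) : ℕ → Set ℂ
  | 0 => {z : ℂ | ‖z‖ < (‖γ 0‖ + ‖γ 1‖) / 2}
  | n + 1 => {z : ℂ | (‖γ n‖ + ‖γ (n + 1)‖) / 2 ≤ ‖z‖ ∧ ‖z‖ < (‖γ (n + 1)‖ + ‖γ (n + 2)‖) / 2}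

/-- The sparseness condition `inf_n |γ_{n+1}|/|γ_n| > 1`. -/
def Sparse (γ : ℕ → ℂ) : Prop := ∃ c : ℝ, 1 < c ∧ ∀ n, c * ‖γ n‖ ≤ ‖γ (n + 1)‖

/-- The admissibility condition `∑_n v_n/(1+|γ_n|²) < ∞`. -/
def Admissible (γ : ℕ → ℂ) (v : ℕ → ℝ) : Prop :=
  Summable fun n => v n / (1 + ‖γ n‖ ^ 2)

/-- Membership in `ℓ²_v`. -/
def MemL2v (v : ℕ → ℝ) (a : ℕ → ℂ) : Prop := Summable fun n => ‖a n‖ ^ 2 * v n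

/-- The squared norm `‖a‖²_v = ∑_n |a_n|² v_n`. -/
def normSqV (v : ℕ → ℝ) (a : ℕ → ℂ) : ℝ := ∑' n, ‖a n‖ ^ 2 * v n

/-- The set `(Γ,v)* = {z : ∑_n v_n/|z-γ_n|² < ∞}`. -/
def GammaStar (γ : ℕ → ℂ) (v : ℕ → ℝ) : Set ℂ :=
  {z : ℂ | Summable fun n => v n / ‖z - γ n‖ ^ 2}

/-- The function of `𝓗(Γ,v)` with coefficient sequence `a`:
`f(z) = ∑_n a_n v_n/(z-γ_n)`. -/
def Hfun (γ : ℕ → ℂ) (v : ℕ → ℝ) (a : ℕ → ℂ) (z : ℂ) : ℂ :=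
  ∑' n, a n * (v n : ℂ) / (z - γ n)

/-- `μ` is a Carleson measure for `𝓗(Γ,v)`:
`∫_ℂ |f|² dμ ≤ C ‖a‖²_v` for every `f ∈ 𝓗(Γ,v)` with coefficients `a ∈ ℓ²_v`. -/
def IsCarleson (γ : ℕ → ℂ) (v : ℕ → ℝ) (μ : Measure ℂ) : Prop :=
  ∃ C : ℝ, 0 < C ∧ ∀ a : ℕ → ℂ, MemL2v v a →
    ∫⁻ z, (‖Hfun γ v a z‖₊ : ℝ≥0∞) ^ 2 ∂μ ≤ ENNReal.ofReal (C * normSqV v a)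

/-- The sequence `(a k)` of coefficient sequences converges weakly to zero in `ℓ²_v`:
it is norm bounded and `∑_n a^{(k)}_n v_n conj(b_n) → 0` for every `b ∈ ℓ²_v`. -/
def WeaklyNull (v : ℕ → ℝ) (a : ℕ → ℕ → ℂ) : Prop :=
  (∃ M : ℝ, ∀ k, normSqV v (a k) ≤ M) ∧
    ∀ b : ℕ → ℂ, MemL2v v b →
      Tendsto (fun k => ∑' n, a k n * (v n : ℂ) * (starRingEnd ℂ) (b n)) atTop (𝓝 0)

/-- `μ` is a compact (vanishing) Carleson measure for `𝓗(Γ,v)`: it is Carleson and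
`∫_ℂ |f_k|² dμ → 0` for every weakly null sequence in `𝓗(Γ,v)`. -/
def IsCompactCarleson (γ : ℕ → ℂ) (v : ℕ → ℝ) (μ : Measure ℂ) : Prop :=
  IsCarleson γ v μ ∧
    ∀ a : ℕ → ℕ → ℂ, (∀ k, MemL2v v (a k)) → WeaklyNull v a →
      Tendsto (fun k => ∫⁻ z, (‖Hfun γ v (a k) z‖₊ : ℝ≥0∞) ^ 2 ∂μ) atTop (𝓝 0)

/-- The local quantity `∫_{Ω_n} v_n/|z-γ_n|² dμ(z)`. -/
def localTerm (γ : ℕ → ℂ) (v : ℕ → ℝ) (μ : Measure ℂ) (n : ℕ) : ℝ≥0∞ :=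
  ∫⁻ z in Omega γ n, ENNReal.ofReal (v n / ‖z - γ n‖ ^ 2) ∂μ

/-- The global quantity
`(∑_{m=1}^n v_m)·(∑_{m=n+1}^∞ ∫_{Ω_m} |z|⁻² dμ) + (∑_{m=n+1}^∞ v_m/|γ_m|²)·(∑_{m=1}^n μ(Ω_m))`. -/
def globalTerm (γ : ℕ → ℂ) (v : ℕ → ℝ) (μ : Measure ℂ) (n : ℕ) : ℝ≥0∞ :=
  ENNReal.ofReal (∑ m ∈ Finset.range (n + 1), v m) *
      (∑' m : ℕ, ∫⁻ z in Omega γ (n + 1 + m), ENNReal.ofReal (1 / ‖z‖ ^ 2) ∂μ) +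
    ENNReal.ofReal (∑' m : ℕ, v (n + 1 + m) / ‖γ (n + 1 + m)‖ ^ 2) *
      (∑ m ∈ Finset.range (n + 1), μ (Omega γ m))

/-! A compact embedding sends coefficient vectors that are bounded in `ℓ²_v` and tend to zero
coordinatewise to functions with `∫ |f|² dμ → 0`. Test this on `a / ‖a‖_v` with `a` a unit vector
`e_n`, an initial segment `1_{m ≤ n}`, or a tail `1_{m > n} / conj γ_m`. The first choice gives the
local term. For the other two, `Re (z / (z - g)) ≥ 1/2` for `|g| ≤ |z|`, `z ≠ g`, rules out
cancellation: `|z f(z)| ≥ ‖a‖²_v / 2` for `|z| ≥ |γ_n|`, respectively `|f(z)| ≥ ‖a‖²_v / 2` for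
`|z| < |γ_{n+1}|`. The normalized initial segments are weakly null only if `∑ v_n = ∞`; if
`∑ v_n < ∞`, the corresponding term is bounded by a multiple of the tail of a convergent series. -/

theorem tendsto_tsum_mul_of_tendsto_apply {ι κ R : Type*} [NonUnitalSeminormedRing R]
    {l : Filter κ} {x : κ → ι → R} {y : ι → R} {M : ℝ}
    (hx : ∀ k, Summable fun i => ‖x k i‖ ^ 2) (hM : ∀ k, ∑' i, ‖x k i‖ ^ 2 ≤ M)
    (hy : Summable fun i => ‖y i‖ ^ 2) (hlim : ∀ i, Tendsto (fun k => x k i) l (𝓝 0)) :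
    Tendsto (fun k => ∑' i, x k i * y i) l (𝓝 0) := by
  rw [tendsto_zero_iff_norm_tendsto_zero, Metric.tendsto_nhds]
  intro ε hε
  obtain ⟨δ, hδ, hδM⟩ : ∃ δ > 0, δ * M < ε / 2 := by
    refine ⟨ε / (2 * (|M| + 1)), by positivity, ?_⟩
    calc ε / (2 * (|M| + 1)) * M ≤ ε / (2 * (|M| + 1)) * |M| := by gcongr; exact le_abs_self M
      _ < ε / (2 * (|M| + 1)) * (|M| + 1) := by gcongr; exact lt_add_one _
      _ = ε / 2 := by field_simp
  -- The excess of `‖x k i‖ ‖y i‖` over `δ ‖x k i‖²` is dominated by AM-GM, uniformly in `k`.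
  let excess (k : κ) (i : ι) : ℝ := max (‖x k i‖ * ‖y i‖ - δ * ‖x k i‖ ^ 2) 0
  have excess_le (k i) : ‖excess k i‖ ≤ δ⁻¹ * ‖y i‖ ^ 2 := by
    rw [Real.norm_of_nonneg (le_max_right _ _)]
    refine max_le ?_ (by positivity)
    rw [le_inv_mul_iff₀ hδ]
    nlinarith [sq_nonneg (δ * ‖x k i‖ - ‖y i‖), sq_nonneg (δ * ‖x k i‖), sq_nonneg ‖y i‖]
  have hexcess (k) : Summable (excess k) :=
    .of_norm_bounded (hy.mul_left δ⁻¹) (excess_le k)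
  have hexcess_lim : Tendsto (fun k => ∑' i, excess k i) l (𝓝 0) := by
    rw [← tsum_zero (α := ℝ) (β := ι)]
    refine tendsto_tsum_of_dominated_convergence (hy.mul_left δ⁻¹) (fun i => ?_)
      (.of_forall excess_le)
    have hnorm := (hlim i).norm
    simpa using ((hnorm.mul_const ‖y i‖).sub ((hnorm.pow 2).const_mul δ)).max
      (tendsto_const_nhds (x := (0 : ℝ)))
  have norm_le (k) : ‖∑' i, x k i * y i‖ ≤ δ * M + ∑' i, excess k i := by
    calc ‖∑' i, x k i * y i‖ ≤ ∑' i, (δ * ‖x k i‖ ^ 2 + excess k i) := by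
          refine tsum_of_norm_bounded (((hx k).mul_left δ).add (hexcess k)).hasSum fun i => ?_
          linarith [norm_mul_le (x k i) (y i),
            le_max_left (‖x k i‖ * ‖y i‖ - δ * ‖x k i‖ ^ 2) 0]
      _ = δ * ∑' i, ‖x k i‖ ^ 2 + ∑' i, excess k i := by
          rw [((hx k).mul_left δ).tsum_add (hexcess k), tsum_mul_left]
      _ ≤ δ * M + ∑' i, excess k i := by gcongr; exact hM k
  filter_upwards [hexcess_lim.eventually_lt_const (half_pos hε)] with k hk
  rw [dist_zero_right, norm_norm]
  linarith [norm_le k]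

theorem weaklyNull_of_tendsto_apply {v : ℕ → ℝ} (hv : ∀ n, 0 ≤ v n) {a : ℕ → ℕ → ℂ} {M : ℝ}
    (ha : ∀ k, MemL2v v (a k)) (hM : ∀ k, normSqV v (a k) ≤ M)
    (hlim : ∀ m, Tendsto (fun k => a k m) atTop (𝓝 0)) : WeaklyNull v a := by
  refine ⟨⟨M, hM⟩, fun b hb => ?_⟩
  have norm_sq (c : ℂ) (n : ℕ) : ‖c * √(v n)‖ ^ 2 = ‖c‖ ^ 2 * v n := by
    rw [norm_mul, mul_pow, Complex.norm_real, Real.norm_eq_abs, sq_abs, Real.sq_sqrt (hv n)]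
  have h := tendsto_tsum_mul_of_tendsto_apply (l := atTop) (M := M)
    (x := fun k n => a k n * √(v n)) (y := fun n => starRingEnd ℂ (b n) * √(v n))
    (by simpa only [norm_sq, MemL2v] using ha) (by simpa only [norm_sq, normSqV] using hM)
    (by simpa only [norm_sq, RCLike.norm_conj, MemL2v] using hb)
    (fun m => by simpa using (hlim m).mul_const (√(v m) : ℂ))
  refine h.congr fun k => tsum_congr fun n => ?_
  rw [mul_mul_mul_comm, ← Complex.ofReal_mul, Real.mul_self_sqrt (hv n)]
  ring

/-- The unit vector `a / ‖a‖_v` of `ℓ²_v`; it is `0` if `‖a‖_v = 0`. -/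
def normalizeV (v : ℕ → ℝ) (a : ℕ → ℂ) (m : ℕ) : ℂ := a m / √(normSqV v a)

/-- The ratio `‖f‖²_{L²(μ)} / ‖f‖²_{𝓗(Γ,v)}` for the function `f` with coefficient sequence `a`,
by which the embedding `I_μ` is tested. The division is carried out under the integral, so that
the ratio is `0` if `‖a‖_v = 0`. -/
def rayleighQuotient (γ : ℕ → ℂ) (v : ℕ → ℝ) (μ : Measure ℂ) (a : ℕ → ℂ) : ℝ≥0∞ :=
  ∫⁻ z, ENNReal.ofReal (‖Hfun γ v a z‖ ^ 2 / normSqV v a) ∂μ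

section Normalization

variable {γ : ℕ → ℂ} {v : ℕ → ℝ} {μ : Measure ℂ}

theorem normSqV_nonneg (hv : ∀ n, 0 ≤ v n) (a : ℕ → ℂ) : 0 ≤ normSqV v a :=
  tsum_nonneg fun n => mul_nonneg (sq_nonneg _) (hv n)

theorem norm_normalizeV_sq_mul (hv : ∀ n, 0 ≤ v n) (a : ℕ → ℂ) (m : ℕ) :
    ‖normalizeV v a m‖ ^ 2 * v m = ‖a m‖ ^ 2 * v m / normSqV v a := by
  rw [normalizeV, norm_div, div_pow, Complex.norm_real, Real.norm_eq_abs, sq_abs,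
    Real.sq_sqrt (normSqV_nonneg hv a), div_mul_eq_mul_div]

theorem MemL2v.normalizeV (hv : ∀ n, 0 ≤ v n) {a : ℕ → ℂ} (ha : MemL2v v a) :
    MemL2v v (normalizeV v a) := by
  simpa only [MemL2v, norm_normalizeV_sq_mul hv] using ha.div_const (normSqV v a)

theorem normSqV_normalizeV_le_one (hv : ∀ n, 0 ≤ v n) (a : ℕ → ℂ) :
    normSqV v (normalizeV v a) ≤ 1 := by
  rw [normSqV, tsum_congr (norm_normalizeV_sq_mul hv a), tsum_div_const]
  exact div_self_le_one (normSqV v a)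

theorem lintegral_Hfun_normalizeV (hv : ∀ n, 0 ≤ v n) (a : ℕ → ℂ) :
    ∫⁻ z, (‖Hfun γ v (normalizeV v a) z‖₊ : ℝ≥0∞) ^ 2 ∂μ = rayleighQuotient γ v μ a := by
  refine lintegral_congr fun z => ?_
  have hf : Hfun γ v (normalizeV v a) z = Hfun γ v a z / √(normSqV v a) := by
    rw [Hfun, Hfun, ← tsum_div_const]
    exact tsum_congr fun m => by rw [normalizeV]; ring
  rw [← enorm_eq_nnnorm, ← ofReal_norm, ← ENNReal.ofReal_pow (norm_nonneg _), hf, norm_div,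
    div_pow, Complex.norm_real, Real.norm_eq_abs, sq_abs, Real.sq_sqrt (normSqV_nonneg hv a)]

theorem IsCarleson.rayleighQuotient_lt_top (hμ : IsCarleson γ v μ) (hv : ∀ n, 0 ≤ v n)
    {a : ℕ → ℂ} (ha : MemL2v v a) : rayleighQuotient γ v μ a < ⊤ := by
  obtain ⟨C, -, hC⟩ := hμ
  rw [← lintegral_Hfun_normalizeV hv]
  exact (hC _ (ha.normalizeV hv)).trans_lt ENNReal.ofReal_lt_top

theorem IsCompactCarleson.tendsto_rayleighQuotient (hμ : IsCompactCarleson γ v μ)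
    (hv : ∀ n, 0 ≤ v n) {a : ℕ → ℕ → ℂ} (ha : ∀ k, MemL2v v (a k))
    (hlim : ∀ m, Tendsto (fun k => normalizeV v (a k) m) atTop (𝓝 0)) :
    Tendsto (fun k => rayleighQuotient γ v μ (a k)) atTop (𝓝 0) := by
  have hmem (k) := (ha k).normalizeV hv
  simp only [← lintegral_Hfun_normalizeV hv]
  exact hμ.2 _ hmem
    (weaklyNull_of_tendsto_apply hv hmem (fun k => normSqV_normalizeV_le_one hv (a k)) hlim)

theorem tendsto_normalizeV_of_eventually_eq_zero {a : ℕ → ℕ → ℂ} {m : ℕ}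
    (h : ∀ᶠ k in atTop, a k m = 0) : Tendsto (fun k => normalizeV v (a k) m) atTop (𝓝 0) :=
  tendsto_const_nhds.congr' <| h.mono fun k hk => by simp only [normalizeV, hk, zero_div]

end Normalization

theorem half_le_re_div_sub {z g : ℂ} (hle : ‖g‖ ≤ ‖z‖) (hne : z ≠ g) :
    1 / 2 ≤ (z / (z - g)).re := by
  have hpos : 0 < Complex.normSq (z - g) := Complex.normSq_pos.2 (sub_ne_zero.2 hne)
  have hsq : Complex.normSq g ≤ Complex.normSq z := by
    simpa only [Complex.normSq_eq_norm_sq] using pow_le_pow_left₀ (norm_nonneg g) hle 2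
  rw [Complex.div_re, ← add_div, le_div_iff₀ hpos]
  simp only [Complex.normSq_apply, Complex.sub_re, Complex.sub_im] at hsq ⊢
  linarith

theorem norm_div_sub_le {z g : ℂ} {r : ℝ} (hz : ‖z‖ < r) (hg : r ≤ ‖g‖) :
    ‖g / (g - z)‖ ≤ r / (r - ‖z‖) := by
  have hdist : ‖g‖ - ‖z‖ ≤ ‖g - z‖ := norm_sub_norm_le g z
  rw [norm_div, div_le_div_iff₀ (by linarith) (sub_pos.2 hz)]
  calc ‖g‖ * (r - ‖z‖) ≤ r * (‖g‖ - ‖z‖) := by nlinarith [norm_nonneg z]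
    _ ≤ r * ‖g - z‖ := by gcongr; linarith [norm_nonneg z]

theorem le_four_mul_sq_div {N x : ℝ} (hN : 0 ≤ N) (h : N ≤ 2 * x) : N ≤ 4 * (x ^ 2 / N) := by
  rcases hN.eq_or_lt with rfl | hpos
  · simp
  · rw [mul_div_assoc', le_div_iff₀ hpos]
    nlinarith

section FiniteSets

variable {γ : ℕ → ℂ} {v : ℕ → ℝ} {μ : Measure ℂ} (s : Finset ℕ)

theorem hasSum_normSqV_indicator_one :
    HasSum (fun m => ‖(s : Set ℕ).indicator (1 : ℕ → ℂ) m‖ ^ 2 * v m) (∑ m ∈ s, v m) := by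
  rw [Finset.sum_congr rfl fun m (hm : m ∈ s) =>
    show v m = ‖(s : Set ℕ).indicator (1 : ℕ → ℂ) m‖ ^ 2 * v m by simp [hm]]
  exact hasSum_sum_of_ne_finset_zero fun m hm => by simp [hm]

theorem memL2v_indicator_one : MemL2v v ((s : Set ℕ).indicator 1) :=
  (hasSum_normSqV_indicator_one s).summable

theorem normSqV_indicator_one : normSqV v ((s : Set ℕ).indicator 1) = ∑ m ∈ s, v m :=
  (hasSum_normSqV_indicator_one s).tsum_eq

theorem Hfun_indicator_one (z : ℂ) :
    Hfun γ v ((s : Set ℕ).indicator 1) z = ∑ m ∈ s, (v m : ℂ) / (z - γ m) := by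
  rw [Hfun, tsum_eq_sum (s := s) fun m hm => by simp [hm]]
  exact Finset.sum_congr rfl fun m hm => by simp [hm]

variable {s}

theorem sum_le_two_mul_norm_Hfun (hv : ∀ m ∈ s, 0 ≤ v m) {z : ℂ}
    (hle : ∀ m ∈ s, ‖γ m‖ ≤ ‖z‖) (hne : ∀ m ∈ s, z ≠ γ m) :
    ∑ m ∈ s, v m ≤ 2 * (‖z‖ * ‖Hfun γ v ((s : Set ℕ).indicator 1) z‖) := by
  have hre : (z * Hfun γ v ((s : Set ℕ).indicator 1) z).re =
      ∑ m ∈ s, v m * (z / (z - γ m)).re := by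
    rw [Hfun_indicator_one, Finset.mul_sum, Complex.re_sum]
    exact Finset.sum_congr rfl fun m _ => by rw [← Complex.re_ofReal_mul, mul_div_left_comm]
  calc ∑ m ∈ s, v m = 2 * ∑ m ∈ s, v m * (1 / 2) := by rw [← Finset.sum_mul]; ring
    _ ≤ 2 * ∑ m ∈ s, v m * (z / (z - γ m)).re := by
        gcongr with m hm
        · exact hv m hm
        · exact half_le_re_div_sub (hle m hm) (hne m hm)
    _ ≤ 2 * (‖z‖ * ‖Hfun γ v ((s : Set ℕ).indicator 1) z‖) := by
        rw [← hre, ← norm_mul]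
        gcongr
        exact Complex.re_le_norm _

theorem sum_mul_setLIntegral_le (hv : ∀ m ∈ s, 0 ≤ v m) {r : ℝ} (hr : ∀ m ∈ s, ‖γ m‖ ≤ r)
    (hμ : μ (γ '' s) = 0) :
    ENNReal.ofReal (∑ m ∈ s, v m) *
        ∫⁻ z in {z | r ≤ ‖z‖}, ENNReal.ofReal (1 / ‖z‖ ^ 2) ∂μ ≤
      4 * rayleighQuotient γ v μ ((s : Set ℕ).indicator 1) := by
  have hV : 0 ≤ ∑ m ∈ s, v m := Finset.sum_nonneg hv
  rw [← lintegral_const_mul' _ _ ENNReal.ofReal_ne_top, rayleighQuotient,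
    ← lintegral_const_mul' _ _ (by simp)]
  refine (setLIntegral_mono_ae' (measurableSet_le measurable_const measurable_norm) ?_).trans
    (setLIntegral_le_lintegral _ _)
  filter_upwards [measure_eq_zero_iff_ae_notMem.1 hμ] with z hzγ (hz : r ≤ ‖z‖)
  have hne (m) (hm : m ∈ s) : z ≠ γ m := fun h => hzγ ⟨m, hm, h.symm⟩
  rw [normSqV_indicator_one, ← ENNReal.ofReal_mul hV, ← ENNReal.ofReal_ofNat 4,
    ← ENNReal.ofReal_mul (by norm_num), mul_one_div]
  refine ENNReal.ofReal_le_ofReal (div_le_of_le_mul₀ (by positivity) (by positivity) ?_)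
  calc ∑ m ∈ s, v m
      ≤ 4 * ((‖z‖ * ‖Hfun γ v ((s : Set ℕ).indicator 1) z‖) ^ 2 / ∑ m ∈ s, v m) :=
        le_four_mul_sq_div hV
          (sum_le_two_mul_norm_Hfun hv (fun m hm => (hr m hm).trans hz) hne)
    _ = _ := by ring

end FiniteSets

section ConjInverse

variable {γ : ℕ → ℂ} {v : ℕ → ℝ} {μ : Measure ℂ} {A : Set ℕ}

theorem norm_indicator_conj_inv_sq_mul (m : ℕ) :
    ‖A.indicator (fun m => (starRingEnd ℂ (γ m))⁻¹) m‖ ^ 2 * v m =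
      A.indicator (fun m => v m / ‖γ m‖ ^ 2) m := by
  by_cases hm : m ∈ A
  · simp only [hm, Set.indicator_of_mem, norm_inv, RCLike.norm_conj, inv_pow]
    rw [inv_mul_eq_div]
  · simp [hm]

theorem memL2v_indicator_conj_inv (hw : Summable fun m => v m / ‖γ m‖ ^ 2) :
    MemL2v v (A.indicator fun m => (starRingEnd ℂ (γ m))⁻¹) := by
  simpa only [MemL2v, norm_indicator_conj_inv_sq_mul] using hw.indicator A

theorem normSqV_indicator_conj_inv :
    normSqV v (A.indicator fun m => (starRingEnd ℂ (γ m))⁻¹) =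
      ∑' m, A.indicator (fun m => v m / ‖γ m‖ ^ 2) m :=
  tsum_congr norm_indicator_conj_inv_sq_mul

theorem Hfun_indicator_conj_inv (z : ℂ) :
    Hfun γ v (A.indicator fun m => (starRingEnd ℂ (γ m))⁻¹) z =
      -∑' m, ((A.indicator (fun m => v m / ‖γ m‖ ^ 2) m : ℝ) : ℂ) * (γ m / (γ m - z)) := by
  rw [Hfun, ← tsum_neg]
  refine tsum_congr fun m => ?_
  by_cases hm : m ∈ A
  · have hsq : ((‖γ m‖ : ℂ)) ^ 2 = γ m * starRingEnd ℂ (γ m) := (Complex.mul_conj' _).symm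
    simp only [hm, Set.indicator_of_mem, Complex.ofReal_div, Complex.ofReal_pow, hsq]
    rw [← neg_sub z (γ m), div_neg]
    by_cases hγ : γ m = 0
    · simp [hγ]
    · have hconj : starRingEnd ℂ (γ m) ≠ 0 := by simpa using hγ
      field_simp
  · simp [hm]

theorem tsum_le_two_mul_norm_Hfun (hv : ∀ n, 0 ≤ v n)
    (hw : Summable fun m => v m / ‖γ m‖ ^ 2) {r : ℝ} (hr : ∀ m ∈ A, r ≤ ‖γ m‖) {z : ℂ}
    (hz : ‖z‖ < r) :
    ∑' m, A.indicator (fun m => v m / ‖γ m‖ ^ 2) m ≤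
      2 * ‖Hfun γ v (A.indicator fun m => (starRingEnd ℂ (γ m))⁻¹) z‖ := by
  set w : ℕ → ℝ := A.indicator fun m => v m / ‖γ m‖ ^ 2
  have w_nonneg (m) : 0 ≤ w m :=
    Set.indicator_nonneg (fun m _ => div_nonneg (hv m) (sq_nonneg _)) m
  have mem_of_ne {m} (hm : w m ≠ 0) : m ∈ A := Set.mem_of_indicator_ne_zero hm
  have w_summable : Summable w := hw.indicator A
  have hterms : Summable fun m => (w m : ℂ) * (γ m / (γ m - z)) := by
    refine .of_norm_bounded (w_summable.mul_right (r / (r - ‖z‖))) fun m => ?_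
    rw [norm_mul, Complex.norm_real, Real.norm_of_nonneg (w_nonneg m)]
    by_cases hm : w m = 0
    · simp [hm]
    · exact mul_le_mul_of_nonneg_left (norm_div_sub_le hz (hr m (mem_of_ne hm))) (w_nonneg m)
  have hre (m) : w m * (1 / 2) ≤ ((w m : ℂ) * (γ m / (γ m - z))).re := by
    rw [Complex.re_ofReal_mul]
    by_cases hm : w m = 0
    · simp [hm]
    · have hlt : ‖z‖ < ‖γ m‖ := hz.trans_le (hr m (mem_of_ne hm))
      exact mul_le_mul_of_nonneg_left
        (half_le_re_div_sub hlt.le (ne_of_apply_ne norm hlt.ne')) (w_nonneg m)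
  calc ∑' m, w m = 2 * ∑' m, w m * (1 / 2) := by rw [tsum_mul_right]; ring
    _ ≤ 2 * (∑' m, (w m : ℂ) * (γ m / (γ m - z))).re := by
        rw [Complex.re_tsum hterms]
        refine mul_le_mul_of_nonneg_left ?_ zero_le_two
        exact (w_summable.mul_right _).tsum_le_tsum hre (Complex.hasSum_re hterms.hasSum).summable
    _ ≤ 2 * ‖Hfun γ v (A.indicator fun m => (starRingEnd ℂ (γ m))⁻¹) z‖ := by
        rw [Hfun_indicator_conj_inv, norm_neg]
        gcongr
        exact Complex.re_le_norm _

theorem tsum_mul_measure_le (hv : ∀ n, 0 ≤ v n) (hw : Summable fun m => v m / ‖γ m‖ ^ 2)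
    {r : ℝ} (hr : ∀ m ∈ A, r ≤ ‖γ m‖) :
    ENNReal.ofReal (∑' m, A.indicator (fun m => v m / ‖γ m‖ ^ 2) m) * μ {z | ‖z‖ < r} ≤
      4 * rayleighQuotient γ v μ (A.indicator fun m => (starRingEnd ℂ (γ m))⁻¹) := by
  rw [← setLIntegral_const, rayleighQuotient, ← lintegral_const_mul' _ _ (by simp)]
  refine (setLIntegral_mono' (measurableSet_lt measurable_norm measurable_const)
    fun z (hz : ‖z‖ < r) => ?_).trans (setLIntegral_le_lintegral _ _)
  rw [← ENNReal.ofReal_ofNat 4, ← ENNReal.ofReal_mul (by norm_num)]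
  refine ENNReal.ofReal_le_ofReal ?_
  rw [← normSqV_indicator_conj_inv]
  refine le_four_mul_sq_div (normSqV_nonneg hv _) ?_
  rw [normSqV_indicator_conj_inv]
  exact tsum_le_two_mul_norm_Hfun hv hw hr hz

end ConjInverse

/-- The inner radius of the shell `Omega γ n`, which is the outer radius of `Omega γ (n - 1)`. -/
def shellRadius (γ : ℕ → ℂ) : ℕ → ℝ
  | 0 => 0
  | n + 1 => (‖γ n‖ + ‖γ (n + 1)‖) / 2

section Shells

variable {γ : ℕ → ℂ}

theorem Omega_eq_preimage_Ico (n : ℕ) :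
    Omega γ n = norm ⁻¹' Set.Ico (shellRadius γ n) (shellRadius γ (n + 1)) := by
  cases n <;> ext z <;> simp [Omega, shellRadius]

theorem measurableSet_Omega (n : ℕ) : MeasurableSet (Omega γ n) := by
  rw [Omega_eq_preimage_Ico]
  exact measurable_norm measurableSet_Ico

theorem monotone_shellRadius (hγ : Monotone fun n => ‖γ n‖) : Monotone (shellRadius γ) := by
  refine monotone_nat_of_le_succ fun n => ?_
  cases n with
  | zero => simp only [shellRadius]; positivity
  | succ n =>
    simp only [shellRadius]
    linarith [hγ n.le_succ, hγ (n + 1).le_succ]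

theorem pairwise_disjoint_Omega (hγ : Monotone fun n => ‖γ n‖) :
    Pairwise (Function.onFun Disjoint (Omega γ)) := fun i j hij => by
  simp only [Function.onFun, Omega_eq_preimage_Ico]
  exact ((monotone_shellRadius hγ).pairwise_disjoint_on_Ico_succ hij).preimage norm

theorem norm_le_of_mem_Omega (hγ : Monotone fun n => ‖γ n‖) {m n : ℕ} (hmn : m < n) {z : ℂ}
    (hz : z ∈ Omega γ n) : ‖γ m‖ ≤ ‖z‖ := by
  rw [Omega_eq_preimage_Ico] at hz
  calc ‖γ m‖ ≤ shellRadius γ (m + 1) := by simp only [shellRadius]; linarith [hγ m.le_succ]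
    _ ≤ shellRadius γ n := monotone_shellRadius hγ hmn
    _ ≤ ‖z‖ := hz.1

theorem norm_lt_of_mem_Omega (hγ : Monotone fun n => ‖γ n‖) {m n : ℕ} (hmn : m < n) {z : ℂ}
    (hz : z ∈ Omega γ m) : ‖z‖ < ‖γ n‖ := by
  rw [Omega_eq_preimage_Ico] at hz
  calc ‖z‖ < shellRadius γ (m + 1) := hz.2
    _ ≤ ‖γ (m + 1)‖ := by simp only [shellRadius]; linarith [hγ m.le_succ]
    _ ≤ ‖γ n‖ := hγ hmn

theorem tsum_setLIntegral_Omega_le (hγ : Monotone fun n => ‖γ n‖) (μ : Measure ℂ)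
    (f : ℂ → ℝ≥0∞) (n : ℕ) :
    ∑' m, ∫⁻ z in Omega γ (n + 1 + m), f z ∂μ ≤ ∫⁻ z in {z | ‖γ n‖ ≤ ‖z‖}, f z ∂μ := by
  rw [← lintegral_iUnion (fun m => measurableSet_Omega (n + 1 + m))
    fun i j hij => pairwise_disjoint_Omega hγ (by lia)]
  exact lintegral_mono_set (Set.iUnion_subset fun m z => norm_le_of_mem_Omega hγ (by lia))

theorem sum_measure_Omega_le (hγ : Monotone fun n => ‖γ n‖) (μ : Measure ℂ) (n : ℕ) :
    ∑ m ∈ Finset.range n, μ (Omega γ m) ≤ μ {z | ‖z‖ < ‖γ n‖} := by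
  rw [← measure_biUnion_finset (fun i _ j _ hij => pairwise_disjoint_Omega hγ hij)
    fun m _ => measurableSet_Omega m]
  exact measure_mono <| Set.iUnion₂_subset fun m hm z =>
    norm_lt_of_mem_Omega hγ (Finset.mem_range.1 hm)

end Shells

theorem Admissible.summable_div_norm_sq {γ : ℕ → ℂ} {v : ℕ → ℝ} (hadm : Admissible γ v)
    (hγ0 : γ 0 ≠ 0) (hγ_mono : Monotone fun n => ‖γ n‖) (hv : ∀ n, 0 ≤ v n) :
    Summable fun n => v n / ‖γ n‖ ^ 2 := by
  refine .of_nonneg_of_le (fun n => div_nonneg (hv n) (sq_nonneg _)) (fun n => ?_)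
    (hadm.mul_left (1 + 1 / ‖γ 0‖ ^ 2))
  have h0 : 0 < ‖γ 0‖ := norm_pos_iff.2 hγ0
  have hn : 0 < ‖γ n‖ := h0.trans_le (hγ_mono n.zero_le)
  have hratio : 1 ≤ ‖γ n‖ ^ 2 / ‖γ 0‖ ^ 2 := by
    rw [one_le_div (by positivity)]
    exact pow_le_pow_left₀ h0.le (hγ_mono n.zero_le) 2
  rw [mul_div_assoc', div_le_div_iff₀ (by positivity) (by positivity)]
  calc v n * (1 + ‖γ n‖ ^ 2) ≤ v n * (‖γ n‖ ^ 2 / ‖γ 0‖ ^ 2 + ‖γ n‖ ^ 2) := by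
        gcongr
        exact hv n
    _ = (1 + 1 / ‖γ 0‖ ^ 2) * v n * ‖γ n‖ ^ 2 := by ring

theorem tsum_indicator_Ioi (f : ℕ → ℝ) (n : ℕ) :
    ∑' m, (Set.Ioi n).indicator f m = ∑' m, f (n + 1 + m) := by
  have hinj : Function.Injective fun m => n + 1 + m := add_right_injective (n + 1)
  rw [← hinj.tsum_eq fun m hm => ?_]
  · exact tsum_congr fun m => Set.indicator_of_mem (show n < n + 1 + m by lia) f
  · exact ⟨m - (n + 1), Nat.add_sub_of_le (Set.mem_of_indicator_ne_zero hm)⟩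

section Limits

variable {γ : ℕ → ℂ} {v : ℕ → ℝ} {μ : Measure ℂ}

theorem tendsto_zero_of_le_four_mul {f g : ℕ → ℝ≥0∞} (hg : Tendsto g atTop (𝓝 0))
    (hfg : ∀ n, f n ≤ 4 * g n) : Tendsto f atTop (𝓝 0) := by
  refine tendsto_of_tendsto_of_tendsto_of_le_of_le tendsto_const_nhds ?_ (fun _ => zero_le) hfg
  simpa using ENNReal.Tendsto.const_mul (a := 4) hg (.inr (by simp))

theorem IsCompactCarleson.tendsto_localTerm (hμ : IsCompactCarleson γ v μ)
    (hv : ∀ n, 0 < v n) : Tendsto (fun n => localTerm γ v μ n) atTop (𝓝 0) := by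
  have hlim := hμ.tendsto_rayleighQuotient (fun n => (hv n).le)
    (fun n => memL2v_indicator_one {n}) fun m => tendsto_normalizeV_of_eventually_eq_zero <| by
      filter_upwards [eventually_gt_atTop m] with n hn
      simp [hn.ne]
  refine tendsto_of_tendsto_of_tendsto_of_le_of_le tendsto_const_nhds hlim
    (fun _ => zero_le) fun n => (setLIntegral_le_lintegral _ _).trans_eq ?_
  refine lintegral_congr fun z => congrArg ENNReal.ofReal ?_
  rw [normSqV_indicator_one, Hfun_indicator_one, Finset.sum_singleton, Finset.sum_singleton,
    norm_div, Complex.norm_real, Real.norm_of_nonneg (hv n).le, div_pow]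
  field_simp [(hv n).ne']

theorem sum_mul_tsum_setLIntegral_Omega_le (hv : ∀ n, 0 ≤ v n)
    (hγ : Monotone fun n => ‖γ n‖) (hμΓ : μ (Set.range γ) = 0) (n : ℕ) :
    ENNReal.ofReal (∑ m ∈ Finset.range (n + 1), v m) *
        ∑' m, ∫⁻ z in Omega γ (n + 1 + m), ENNReal.ofReal (1 / ‖z‖ ^ 2) ∂μ ≤
      4 * rayleighQuotient γ v μ ((Finset.range (n + 1) : Set ℕ).indicator 1) :=
  (mul_le_mul_right (tsum_setLIntegral_Omega_le hγ μ _ n) _).trans <|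
    sum_mul_setLIntegral_le (fun m _ => hv m)
      (fun _ hm => hγ (Finset.mem_range_succ_iff.1 hm))
      (measure_mono_null (Set.image_subset_range _ _) hμΓ)

theorem tendsto_normalizeV_indicator_range (hv : ∀ n, 0 ≤ v n) (hdiv : ¬Summable v) (m : ℕ) :
    Tendsto (fun n => normalizeV v ((Finset.range (n + 1) : Set ℕ).indicator 1) m)
      atTop (𝓝 0) := by
  have hmass : Tendsto (fun n => ∑ m ∈ Finset.range (n + 1), v m) atTop atTop :=
    ((not_summable_iff_tendsto_nat_atTop_of_nonneg hv).1 hdiv).comp (tendsto_add_atTop_nat 1)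
  have hinv := (tendsto_inv_atTop_zero.comp (Real.tendsto_sqrt_atTop.comp hmass)).ofReal
  rw [Complex.ofReal_zero] at hinv
  refine hinv.congr' ?_
  filter_upwards [eventually_ge_atTop m] with n hn
  rw [normalizeV, normSqV_indicator_one]
  simp [hn]

theorem IsCarleson.tendsto_tsum_setLIntegral_Omega (hμ : IsCarleson γ v μ) (hv : ∀ n, 0 < v n)
    (hγ : Monotone fun n => ‖γ n‖) (hμΓ : μ (Set.range γ) = 0) :
    Tendsto (fun n => ∑' m, ∫⁻ z in Omega γ (n + 1 + m), ENNReal.ofReal (1 / ‖z‖ ^ 2) ∂μ)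
      atTop (𝓝 0) := by
  have hv' (n) := (hv n).le
  have hfin : ∑' m, ∫⁻ z in Omega γ (0 + 1 + m), ENNReal.ofReal (1 / ‖z‖ ^ 2) ∂μ ≠ ⊤ := by
    have hlt := (sum_mul_tsum_setLIntegral_Omega_le hv' hγ hμΓ 0).trans_lt
      (ENNReal.mul_lt_top (by simp) (hμ.rayleighQuotient_lt_top hv' (memL2v_indicator_one _)))
    exact (ENNReal.lt_top_of_mul_ne_top_right hlt.ne (by simpa using hv 0)).ne
  refine (ENNReal.tendsto_sum_nat_add _ hfin).congr fun n => tsum_congr fun m => ?_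
  rw [show 0 + 1 + (m + n) = n + 1 + m by lia]

theorem IsCompactCarleson.tendsto_sum_mul_tsum_setLIntegral_Omega
    (hμ : IsCompactCarleson γ v μ) (hv : ∀ n, 0 < v n) (hγ : Monotone fun n => ‖γ n‖)
    (hμΓ : μ (Set.range γ) = 0) :
    Tendsto (fun n => ENNReal.ofReal (∑ m ∈ Finset.range (n + 1), v m) *
        ∑' m, ∫⁻ z in Omega γ (n + 1 + m), ENNReal.ofReal (1 / ‖z‖ ^ 2) ∂μ) atTop (𝓝 0) := by
  have hv' (n) := (hv n).le
  by_cases hsum : Summable v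
  · have hbound := ENNReal.Tendsto.const_mul (a := ENNReal.ofReal (∑' m, v m))
      (hμ.1.tendsto_tsum_setLIntegral_Omega hv hγ hμΓ) (.inr ENNReal.ofReal_ne_top)
    rw [mul_zero] at hbound
    refine tendsto_of_tendsto_of_tendsto_of_le_of_le tendsto_const_nhds hbound
      (fun _ => zero_le) fun n => mul_le_mul_left (ENNReal.ofReal_le_ofReal ?_) _
    exact hsum.sum_le_tsum _ fun i _ => hv' i
  · exact tendsto_zero_of_le_four_mul
      (hμ.tendsto_rayleighQuotient hv' (fun n => memL2v_indicator_one _)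
        (tendsto_normalizeV_indicator_range hv' hsum))
      (sum_mul_tsum_setLIntegral_Omega_le hv' hγ hμΓ)

theorem IsCompactCarleson.tendsto_tsum_mul_sum_measure_Omega (hμ : IsCompactCarleson γ v μ)
    (hv : ∀ n, 0 ≤ v n) (hγ : Monotone fun n => ‖γ n‖)
    (hw : Summable fun m => v m / ‖γ m‖ ^ 2) :
    Tendsto (fun n => ENNReal.ofReal (∑' m, v (n + 1 + m) / ‖γ (n + 1 + m)‖ ^ 2) *
        ∑ m ∈ Finset.range (n + 1), μ (Omega γ m)) atTop (𝓝 0) := by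
  have hlim := hμ.tendsto_rayleighQuotient hv
    (fun n => memL2v_indicator_conj_inv (A := Set.Ioi n) hw)
    fun m => tendsto_normalizeV_of_eventually_eq_zero <| by
      filter_upwards [eventually_ge_atTop m] with n hn
      simp [hn]
  refine tendsto_zero_of_le_four_mul hlim fun n => ?_
  rw [← tsum_indicator_Ioi fun m => v m / ‖γ m‖ ^ 2]
  exact (mul_le_mul_right (sum_measure_Omega_le hγ μ (n + 1)) _).trans
    (tsum_mul_measure_le hv hw fun m hm => hγ hm)

end Limits

theorem compactCarleson_necessary_general (γ : ℕ → ℂ) (v : ℕ → ℝ)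
    (hγ_ne : ∀ n, γ n ≠ 0) (hγ_mono : Monotone fun n => ‖γ n‖)
    (hv : ∀ n, 0 < v n) (hadm : Admissible γ v)
    (μ : Measure ℂ) (hμΓ : μ (Set.range γ) = 0)
    (hcompact : IsCompactCarleson γ v μ) :
    Tendsto (fun n => localTerm γ v μ n) atTop (𝓝 0) ∧
      Tendsto (fun n => globalTerm γ v μ n) atTop (𝓝 0) := by
  have hv' (n) := (hv n).le
  have hhead := hcompact.tendsto_sum_mul_tsum_setLIntegral_Omega hv hγ_mono hμΓ
  have htail := hcompact.tendsto_tsum_mul_sum_measure_Omega hv' hγ_mono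
    (hadm.summable_div_norm_sq (hγ_ne 0) hγ_mono hv')
  exact ⟨hcompact.tendsto_localTerm hv, by simpa only [globalTerm, add_zero] using hhead.add htail⟩

/-- Necessity in the main theorem: if `μ` is a compact Carleson measure for `𝓗(Γ,v)`,
then `∫_{Ω_n} v_n/|z-γ_n|² dμ → 0` and
`(∑_{m=1}^n v_m)(∑_{m=n+1}^∞ ∫_{Ω_m}|z|⁻²dμ) + (∑_{m=n+1}^∞ v_m/|γ_m|²)(∑_{m=1}^n μ(Ω_m)) → 0`. -/
theorem compactCarleson_necessary (γ : ℕ → ℂ) (v : ℕ → ℝ)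
    (hγ_inj : Function.Injective γ) (hγ_ne : ∀ n, γ n ≠ 0)
    (hγ_mono : Monotone fun n => ‖γ n‖) (hγ_sparse : Sparse γ)
    (hv : ∀ n, 0 < v n) (hadm : Admissible γ v)
    (μ : Measure ℂ) (hμΓ : μ (Set.range γ) = 0)
    (hcompact : IsCompactCarleson γ v μ) :
    Tendsto (fun n => localTerm γ v μ n) atTop (𝓝 0) ∧
      Tendsto (fun n => globalTerm γ v μ n) atTop (𝓝 0) :=
  compactCarleson_necessary_general γ v hγ_ne hγ_mono hv hadm μ hμΓ hcompact
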